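/- Fix an integer m ≥ 2 and let f_m(x) = 2·T_m(x/2) be the generalised logistic map of degree m. Let p₀ ∈ L¹[−2,2] be a probability density (p₀ ≥ 0, ∫_{−2}^{2} p₀ = 1) and let μ₀ be the measure with density p₀ (supported in [−2,2]) with respect to Lebesgue measure. For each n, let p_n^m denote the Radon–Nikodym derivative of the pushforward measure (f_m^n)_*μ₀ with respect to Lebesgue measure. Then ∫_{−2}^{2} |p_n^m(x) − D(x)| dx → 0 as n → ∞, where D(x) = 1/(π·√(4−x²)) for −2 < x < 2. -/

import Mathlib

open MeasureTheory Filter Topology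

/-- The generalised logistic map of degree `m`: `f_m(x) = 2·T_m(x/2)`, where `T_m`
is the `m`-th Chebyshev polynomial of the first kind. -/
noncomputable def genLogistic (m : ℕ) (x : ℝ) : ℝ :=
  2 * (Polynomial.Chebyshev.T ℝ (m : ℤ)).eval (x / 2)

/-- The common invariant density `D(x) = 1/(π·√(4−x²))` on `(−2,2)`. -/
noncomputable def dosDensity (x : ℝ) : ℝ :=
  if -2 < x ∧ x < 2 then 1 / (Real.pi * Real.sqrt (4 - x ^ 2)) else 0

instance : Fact ((0:ℝ) < 1) := ⟨one_pos⟩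
lemma vol_eq : (volume : Measure UnitAddCircle) = AddCircle.haarAddCircle := by
  have := AddCircle.volume_eq_smul_haarAddCircle (T := (1:ℝ))
  simpa using this

lemma mp_nsmul (M : ℕ) (hM : 0 < M) :
    MeasurePreserving (fun t : UnitAddCircle => M • t) volume volume := by
  rcases Nat.lt_or_ge 1 M with h | h
  · exact (AddCircle.ergodic_nsmul (T := (1:ℝ)) h).toMeasurePreserving
  · have : M = 1 := by omega
    subst this
    simp only [one_smul]
    exact MeasurePreserving.id _

lemma circle_fourier (M : ℕ) (k : ℤ) (hk : |k| < (M : ℤ)) (G : UnitAddCircle → ℂ)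
    (hG : Measurable G) :
    ∫ t : UnitAddCircle, G (M • t) * fourier k t =
      (∫ t : UnitAddCircle, (fourier k t : ℂ)) * ∫ t : UnitAddCircle, G t := by
  have hM : 0 < M := by have := abs_nonneg k; omega
  have hM' : (M : ℝ) ≠ 0 := by positivity
  have hMc : (M : ℂ) ≠ 0 := by exact_mod_cast hM'
  by_cases hk0 : k = 0
  · subst hk0
    have h1 := (mp_nsmul M hM)
    have : ∫ t : UnitAddCircle, G (M • t) = ∫ t, G t := by
      rw [← integral_map (φ := fun t : UnitAddCircle => M • t) (f := G) h1.aemeasurable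
        hG.aestronglyMeasurable, h1.map_eq]
    simp [this, measureReal_def]
  · set s : UnitAddCircle := ((1 / M : ℝ) : UnitAddCircle) with hs
    have hMs : M • s = 0 := by
      rw [hs, ← AddCircle.coe_nsmul]
      simp [hM']
    have hfs : (fourier k s : ℂ) ≠ 1 := by
      rw [hs, fourier_coe_apply, Ne, Complex.exp_eq_one_iff]
      rintro ⟨n, hn⟩
      have hpi := Complex.two_pi_I_ne_zero
      have h2 : (k : ℂ) = n * M := by
        have : 2 * (Real.pi : ℂ) * Complex.I * (k / M) = 2 * (Real.pi : ℂ) * Complex.I * n := by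
          rw [← mul_comm (n : ℂ), ← hn]; push_cast; field_simp
        have := mul_left_cancel₀ hpi this
        field_simp at this
        rw [this]; ring
      have h3 : k = n * M := by exact_mod_cast h2
      have h4 : n ≠ 0 := by rintro rfl; simp at h3; exact hk0 h3
      rw [h3, abs_mul] at hk
      have := Int.one_le_abs h4
      simp at hk
      nlinarith
    have key : ∀ H : UnitAddCircle → ℂ, (∀ t, H (t + s) = fourier k s * H t) →
        ∫ t, H t = 0 := by
      intro H hH
      have h1 := integral_add_right_eq_self (μ := (volume : Measure UnitAddCircle)) H s
      simp_rw [hH] at h1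
      rw [integral_const_mul] at h1
      have : ((fourier k s : ℂ) - 1) * ∫ t, H t = 0 := by rw [sub_mul, h1]; ring
      rcases mul_eq_zero.1 this with h | h
      · exact absurd (sub_eq_zero.1 h) hfs
      · exact h
    have hadd : ∀ t : UnitAddCircle, (fourier k (t + s) : ℂ) = fourier k s * fourier k t := by
      intro t
      simp only [fourier_apply, smul_add, AddCircle.toCircle_add, Circle.coe_mul]
      ring
    rw [key, key, zero_mul]
    · exact hadd
    · intro t
      rw [hadd, smul_add, hMs, add_zero]; ring

lemma circle_int_bdd (M : ℕ) (q : UnitAddCircle → ℂ)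
    (hq : Integrable q) (G : UnitAddCircle → ℂ) (hG : Measurable G) (hb : ∀ t, ‖G t‖ ≤ 1) :
    Integrable (fun t : UnitAddCircle => G (M • t) * q t) := by
  refine hq.bdd_mul (c := 1) ?_ (Eventually.of_forall fun t => hb _)
  exact (hG.comp (measurable_const_smul M)).aestronglyMeasurable

lemma circle_span (m : ℕ) (hm : 2 ≤ m) (s : Lp ℂ 1 (AddCircle.haarAddCircle (T := (1:ℝ))))
    (hs : s ∈ Submodule.span ℂ (Set.range (fourierLp (T := (1:ℝ)) 1))) :
    ∃ N : ℕ, ∀ n ≥ N, ∀ G : UnitAddCircle → ℂ, Measurable G → (∀ t, ‖G t‖ ≤ 1) →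
      ∫ t : UnitAddCircle, G (m ^ n • t) * s t =
      (∫ t : UnitAddCircle, s t) * ∫ t : UnitAddCircle, G t := by
  have hI : ∀ s : Lp ℂ 1 (AddCircle.haarAddCircle (T := (1:ℝ))),
      Integrable (fun t : UnitAddCircle => s t) := by
    intro s
    rw [vol_eq]
    exact L1.integrable_coeFn s
  induction hs using Submodule.span_induction with
  | mem x hx =>
    obtain ⟨k, rfl⟩ := hx
    refine ⟨k.natAbs, fun n hn G hG hb => ?_⟩
    have hae : ∀ᵐ t : UnitAddCircle, (fourierLp (T := (1:ℝ)) 1 k) t = fourier k t := by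
      rw [vol_eq]
      exact coeFn_fourierLp 1 k
    have h1 : n < m ^ n := Nat.lt_pow_self (by omega)
    have h2 := circle_fourier (m ^ n) k (by rw [Int.abs_eq_natAbs]; exact_mod_cast lt_of_le_of_lt hn h1) G hG
    rw [integral_congr_ae hae, ← h2]
    refine integral_congr_ae ?_
    filter_upwards [hae] with t ht
    rw [ht]
  | zero =>
    refine ⟨0, fun n hn G hG hb => ?_⟩
    have hae : ∀ᵐ t : UnitAddCircle,
        (0 : Lp ℂ 1 (AddCircle.haarAddCircle (T := (1:ℝ)))) t = 0 := by
      rw [vol_eq]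
      exact Lp.coeFn_zero _ _ _
    rw [integral_congr_ae hae, integral_zero, zero_mul]
    refine integral_eq_zero_of_ae ?_
    filter_upwards [hae] with t ht
    rw [ht]; simp
  | add x y hx hy ihx ihy =>
    obtain ⟨N₁, h₁⟩ := ihx
    obtain ⟨N₂, h₂⟩ := ihy
    refine ⟨max N₁ N₂, fun n hn G hG hb => ?_⟩
    have hae : ∀ᵐ t : UnitAddCircle, (x + y) t = x t + y t := by
      rw [vol_eq]
      exact Lp.coeFn_add _ _
    rw [integral_congr_ae hae, integral_add (hI x) (hI y), add_mul,
      ← h₁ n (le_trans (le_max_left _ _) hn) G hG hb,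
      ← h₂ n (le_trans (le_max_right _ _) hn) G hG hb,
      ← integral_add (circle_int_bdd _ _ (hI x) G hG hb) (circle_int_bdd _ _ (hI y) G hG hb)]
    refine integral_congr_ae ?_
    filter_upwards [hae] with t ht
    rw [ht, mul_add]
  | smul a x hx ihx =>
    obtain ⟨N₁, h₁⟩ := ihx
    refine ⟨N₁, fun n hn G hG hb => ?_⟩
    have hae : ∀ᵐ t : UnitAddCircle, (a • x) t = a * x t := by
      rw [vol_eq]
      exact Lp.coeFn_smul _ _
    rw [integral_congr_ae hae, integral_const_mul, mul_assoc, ← h₁ n hn G hG hb,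
      ← integral_const_mul]
    refine integral_congr_ae ?_
    filter_upwards [hae] with t ht
    rw [ht]; ring

lemma circle_mixing (m : ℕ) (hm : 2 ≤ m) (q : UnitAddCircle → ℝ) (hq : Integrable q)
    (ε : ℝ) (hε : 0 < ε) :
    ∃ N : ℕ, ∀ n ≥ N, ∀ G : UnitAddCircle → ℝ, Measurable G → (∀ t, |G t| ≤ 1) →
      |(∫ t : UnitAddCircle, G (m ^ n • t) * q t) -
      (∫ t : UnitAddCircle, q t) * ∫ t : UnitAddCircle, G t| ≤ ε := by
  have hqc : Integrable (fun t => (q t : ℂ)) := hq.ofReal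
  have hqh : Integrable (fun t => (q t : ℂ)) (AddCircle.haarAddCircle (T := (1:ℝ))) := by
    rw [← vol_eq]; exact hqc
  have hmem : hqh.toL1 _ ∈
      (Submodule.span ℂ (Set.range (fourierLp (T := (1:ℝ)) 1))).topologicalClosure := by
    rw [span_fourierLp_closure_eq_top (by simp)]; trivial
  rw [← SetLike.mem_coe, Submodule.topologicalClosure_coe, Metric.mem_closure_iff] at hmem
  obtain ⟨s, hs, hd⟩ := hmem (ε / 2) (by positivity)
  obtain ⟨N, hN⟩ := circle_span m hm s hs
  have hsI : Integrable (fun t : UnitAddCircle => s t) := by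
    rw [vol_eq]
    exact L1.integrable_coeFn s
  have hdist : ∫ t : UnitAddCircle, ‖(q t : ℂ) - s t‖ < ε / 2 := by
    rw [dist_eq_norm, L1.norm_eq_integral_norm] at hd
    have hv : ∫ t : UnitAddCircle, ‖(hqh.toL1 _ - s) t‖ =
        ∫ t, ‖(hqh.toL1 _ - s) t‖ ∂AddCircle.haarAddCircle := by rw [vol_eq]
    refine lt_of_eq_of_lt ((integral_congr_ae ?_).trans hv) hd
    have h1 : ∀ᵐ t : UnitAddCircle, (hqh.toL1 _ - s) t = (hqh.toL1 _) t - s t := by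
      rw [vol_eq]
      exact Lp.coeFn_sub _ _
    have h2 : ∀ᵐ t : UnitAddCircle, (hqh.toL1 _) t = (q t : ℂ) := by
      rw [vol_eq]
      exact hqh.coeFn_toL1
    filter_upwards [h1, h2] with t h1 h2
    rw [h1, h2]
  refine ⟨N, fun n hn G hG hb => ?_⟩
  have hGc : Measurable (fun t => (G t : ℂ)) := Complex.measurable_ofReal.comp hG
  have hbc : ∀ t, ‖(G t : ℂ)‖ ≤ 1 := fun t => by simpa using hb t
  have h := hN n hn (fun t => (G t : ℂ)) hGc hbc
  have hnorm : ‖∫ t : UnitAddCircle, (G t : ℂ)‖ ≤ 1 := by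
    refine (norm_integral_le_of_norm_le_const (C := 1) (Eventually.of_forall hbc)).trans ?_
    simp [measureReal_def]
  have e1 : ‖(∫ t : UnitAddCircle, (G (m ^ n • t) : ℂ) * q t)
      - ∫ t : UnitAddCircle, (G (m ^ n • t) : ℂ) * s t‖ ≤ ε / 2 := by
    rw [← integral_sub (circle_int_bdd _ _ hqc _ hGc hbc) (circle_int_bdd _ _ hsI _ hGc hbc)]
    refine (norm_integral_le_integral_norm _).trans (le_trans ?_ hdist.le)
    refine integral_mono_of_nonneg (Eventually.of_forall fun t => norm_nonneg _)
      (hqc.sub hsI).norm (Eventually.of_forall fun t => ?_)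
    simp only
    rw [← mul_sub, norm_mul]
    exact mul_le_of_le_one_left (norm_nonneg _) (hbc _)
  have e2 : ‖(∫ t : UnitAddCircle, s t) - ∫ t : UnitAddCircle, (q t : ℂ)‖ ≤ ε / 2 := by
    rw [norm_sub_rev, ← integral_sub hqc hsI]
    exact (norm_integral_le_integral_norm _).trans hdist.le
  have e3 : ‖((∫ t : UnitAddCircle, s t) - ∫ t : UnitAddCircle, (q t : ℂ)) *
      ∫ t : UnitAddCircle, (G t : ℂ)‖ ≤ ε / 2 := by
    rw [norm_mul]
    exact (mul_le_of_le_one_right (norm_nonneg _) hnorm).trans e2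
  have e4 : ‖(∫ t : UnitAddCircle, (G (m ^ n • t) : ℂ) * q t) -
      (∫ t : UnitAddCircle, (q t : ℂ)) * ∫ t : UnitAddCircle, (G t : ℂ)‖ ≤ ε := by
    have := norm_add_le_of_le e1 e3
    rw [h, sub_mul, sub_add_sub_cancel] at this
    linarith
  rw [← Real.norm_eq_abs, ← Complex.norm_real]
  convert e4 using 2
  push_cast [← integral_complex_ofReal]
  rfl

noncomputable def circCos (t : UnitAddCircle) : ℝ := 2 * (fourier 1 t : ℂ).re

lemma circCos_coe (x : ℝ) : circCos (x : UnitAddCircle) = 2 * Real.cos (2 * Real.pi * x) := by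
  rw [circCos, fourier_coe_apply]
  have : (2 * (Real.pi : ℂ) * Complex.I * ((1 : ℤ) : ℂ) * x / ((1 : ℝ) : ℂ))
      = ((2 * Real.pi * x : ℝ) : ℂ) * Complex.I := by push_cast; ring
  rw [this, Complex.exp_ofReal_mul_I_re]

lemma measurable_circCos : Measurable circCos := by
  unfold circCos
  have : Continuous fun t : UnitAddCircle => 2 * (fourier 1 t : ℂ).re := by fun_prop
  exact this.measurable

lemma genLogistic_circCos (m : ℕ) (t : UnitAddCircle) :
    genLogistic m (circCos t) = circCos (m • t) := by
  induction t using QuotientAddGroup.induction_on with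
  | H x =>
    have : m • (x : UnitAddCircle) = ((m * x : ℝ) : UnitAddCircle) := by
      rw [← AddCircle.coe_nsmul]; simp
    change genLogistic m (circCos (x : UnitAddCircle)) = circCos (m • (x : UnitAddCircle))
    rw [this, circCos_coe, circCos_coe, genLogistic, mul_div_cancel_left₀ _ two_ne_zero,
      Polynomial.Chebyshev.T_real_cos]
    congr 2
    push_cast; ring

lemma genLogistic_iter_circCos (m n : ℕ) (t : UnitAddCircle) :
    (genLogistic m)^[n] (circCos t) = circCos (m ^ n • t) := by
  induction n with
  | zero => simp
  | succ n ih =>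
    rw [Function.iterate_succ_apply', ih, genLogistic_circCos, smul_smul, pow_succ']

lemma measurable_genLogistic_iter (m n : ℕ) : Measurable ((genLogistic m)^[n]) := by
  refine Measurable.iterate ?_ n
  have : Continuous (genLogistic m) := by unfold genLogistic; fun_prop
  exact this.measurable

lemma measurable_dosDensity : Measurable dosDensity := by
  unfold dosDensity
  refine Measurable.ite ?_ (by fun_prop) measurable_const
  exact measurableSet_Ioo (a := (-2 : ℝ)) (b := 2)

lemma dosDensity_nonneg (x : ℝ) : 0 ≤ dosDensity x := by
  unfold dosDensity; split_ifs <;> positivity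

lemma dosDensity_pos {x : ℝ} (hx : x ∈ Set.Ioo (-2 : ℝ) 2) : 0 < dosDensity x := by
  unfold dosDensity
  rw [if_pos (show -2 < x ∧ x < 2 from hx)]
  have : 0 < 4 - x ^ 2 := by nlinarith [hx.1, hx.2]
  have := Real.sqrt_pos.2 this
  positivity

lemma cov_half (I : Set ℝ) (hI : MeasurableSet I)
    (hinj : Set.InjOn (fun x : ℝ => 2 * Real.cos (2 * Real.pi * x)) I)
    (himg : (fun x : ℝ => 2 * Real.cos (2 * Real.pi * x)) '' I = Set.Ioo (-2) 2)
    (g : ℝ → ENNReal) :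
    2 * ∫⁻ x in I, g (2 * Real.cos (2 * Real.pi * x)) =
      ∫⁻ x in Set.Ioo (-2) 2, ENNReal.ofReal (dosDensity x) * g x := by
  rw [← himg, lintegral_image_eq_lintegral_abs_deriv_mul
    (f' := fun x => 2 * (-Real.sin (2 * Real.pi * x) * (2 * Real.pi))) hI ?_ hinj]
  · rw [← lintegral_const_mul' _ _ (by simp)]
    refine setLIntegral_congr_fun hI ?_
    intro x hx
    have hmem : 2 * Real.cos (2 * Real.pi * x) ∈ Set.Ioo (-2 : ℝ) 2 :=
      himg ▸ Set.mem_image_of_mem _ hx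
    simp only
    rw [← mul_assoc, ← ENNReal.ofReal_mul (abs_nonneg _)]
    congr 1
    have hs : Real.sqrt (4 - (2 * Real.cos (2 * Real.pi * x)) ^ 2) =
        2 * |Real.sin (2 * Real.pi * x)| := by
      rw [show 4 - (2 * Real.cos (2 * Real.pi * x)) ^ 2 = (2 * Real.sin (2 * Real.pi * x)) ^ 2 by
        nlinarith [Real.sin_sq_add_cos_sq (2 * Real.pi * x)], Real.sqrt_sq_eq_abs, abs_mul,
        abs_two]
    have hpos := dosDensity_pos hmem
    unfold dosDensity at hpos ⊢
    have hmem2 : -2 < 2 * Real.cos (2 * Real.pi * x) ∧ 2 * Real.cos (2 * Real.pi * x) < 2 := hmem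
    rw [if_pos hmem2] at hpos ⊢
    rw [hs] at hpos ⊢
    have hne : |Real.sin (2 * Real.pi * x)| ≠ 0 := by
      intro h0; rw [h0] at hpos; simp at hpos
    rw [abs_mul, abs_mul, abs_neg, abs_two, abs_of_pos Real.two_pi_pos]
    have hp := Real.pi_pos.ne'
    rw [show 2 * (|Real.sin (2 * Real.pi * x)| * (2 * Real.pi)) *
      (1 / (Real.pi * (2 * |Real.sin (2 * Real.pi * x)|))) = 2 by field_simp]
    simp
  · intro x hx
    have h1 : HasDerivAt (fun x : ℝ => 2 * Real.pi * x) (2 * Real.pi) x := by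
      simpa using (hasDerivAt_id x).const_mul (2 * Real.pi)
    exact ((h1.cos).const_mul 2).hasDerivWithinAt

lemma cos_img_pos : Set.InjOn (fun x : ℝ => 2 * Real.cos (2 * Real.pi * x)) (Set.Ioo 0 (1/2)) ∧
    (fun x : ℝ => 2 * Real.cos (2 * Real.pi * x)) '' (Set.Ioo 0 (1/2)) = Set.Ioo (-2) 2 := by
  have hp := Real.pi_pos
  have hanti : StrictAntiOn (fun x : ℝ => 2 * Real.cos (2 * Real.pi * x)) (Set.Icc 0 (1/2)) := by
    intro x hx y hy hxy
    have := Real.strictAntiOn_cos (a := 2 * Real.pi * x) (b := 2 * Real.pi * y)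
      ⟨by nlinarith [hx.1], by nlinarith [hx.2]⟩ ⟨by nlinarith [hy.1], by nlinarith [hy.2]⟩
      (by nlinarith)
    simp only
    linarith
  have hc : Continuous (fun x : ℝ => 2 * Real.cos (2 * Real.pi * x)) := by fun_prop
  have e0 : 2 * Real.cos (2 * Real.pi * 0) = 2 := by simp
  have e1 : 2 * Real.cos (2 * Real.pi * (1/2)) = -2 := by
    rw [show 2 * Real.pi * (1/2) = Real.pi by ring]; simp
  refine ⟨hanti.injOn.mono Set.Ioo_subset_Icc_self, Set.Subset.antisymm ?_ ?_⟩
  · rintro _ ⟨x, hx, rfl⟩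
    have hx' := Set.Ioo_subset_Icc_self hx
    have a := hanti (by norm_num) hx' hx.1
    have b := hanti hx' (by norm_num) hx.2
    simp only at a b
    rw [e0] at a
    rw [e1] at b
    exact ⟨b, a⟩
  · have := intermediate_value_Ioo' (a := (0:ℝ)) (b := 1/2) (by norm_num) hc.continuousOn
    rwa [e0, e1] at this

lemma cos_img_neg : Set.InjOn (fun x : ℝ => 2 * Real.cos (2 * Real.pi * x)) (Set.Ioo (-(1/2)) 0) ∧
    (fun x : ℝ => 2 * Real.cos (2 * Real.pi * x)) '' (Set.Ioo (-(1/2)) 0) = Set.Ioo (-2) 2 := by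
  have hev : ∀ x : ℝ, 2 * Real.cos (2 * Real.pi * (-x)) = 2 * Real.cos (2 * Real.pi * x) := by
    intro x; rw [mul_neg, Real.cos_neg]
  constructor
  · intro x hx y hy hxy
    have := cos_img_pos.1 (show -x ∈ Set.Ioo (0:ℝ) (1/2) from
      ⟨by linarith [hx.2], by linarith [hx.1]⟩) (show -y ∈ Set.Ioo (0:ℝ) (1/2) from
      ⟨by linarith [hy.2], by linarith [hy.1]⟩) (by simpa only [hev] using hxy)
    linarith
  · rw [← cos_img_pos.2]
    ext y
    constructor
    · rintro ⟨x, hx, rfl⟩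
      exact ⟨-x, ⟨by linarith [hx.2], by linarith [hx.1]⟩, hev x⟩
    · rintro ⟨x, hx, rfl⟩
      exact ⟨-x, ⟨by linarith [hx.2], by linarith [hx.1]⟩, hev x⟩

lemma map_circCos : Measure.map circCos volume =
    volume.withDensity (fun x => ENNReal.ofReal (dosDensity x)) := by
  refine Measure.ext_of_lintegral _ fun g hg => ?_
  rw [lintegral_map hg measurable_circCos,
    lintegral_withDensity_eq_lintegral_mul _ measurable_dosDensity.ennreal_ofReal hg,
    ← UnitAddCircle.lintegral_preimage (-(1/2))]
  simp_rw [circCos_coe]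
  have hR : ∫⁻ x, ((fun x => ENNReal.ofReal (dosDensity x)) * g) x =
      ∫⁻ x in Set.Ioo (-2) 2, ENNReal.ofReal (dosDensity x) * g x := by
    rw [← lintegral_indicator measurableSet_Ioo]
    refine lintegral_congr fun x => ?_
    by_cases hx : x ∈ Set.Ioo (-2 : ℝ) 2
    · simp [hx]
    · have : dosDensity x = 0 := by unfold dosDensity; exact if_neg hx
      simp [hx, this]
  rw [hR]
  have h1 := cov_half _ measurableSet_Ioo cos_img_pos.1 cos_img_pos.2 g
  have h2 := cov_half _ measurableSet_Ioo cos_img_neg.1 cos_img_neg.2 g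
  have hsplit : ∫⁻ x in Set.Ioc (-(1/2)) (-(1/2) + 1), g (2 * Real.cos (2 * Real.pi * x)) =
      (∫⁻ x in Set.Ioo (-(1/2)) 0, g (2 * Real.cos (2 * Real.pi * x))) +
      ∫⁻ x in Set.Ioo 0 (1/2), g (2 * Real.cos (2 * Real.pi * x)) := by
    rw [show (-(1/2) + 1 : ℝ) = 1/2 by norm_num,
      ← Set.Ioc_union_Ioc_eq_Ioc (a := (-(1/2):ℝ)) (b := 0) (c := 1/2) (by norm_num) (by norm_num),
      lintegral_union measurableSet_Ioc (Set.Ioc_disjoint_Ioc_of_le le_rfl),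
      setLIntegral_congr (Ioo_ae_eq_Ioc (a := (-(1/2):ℝ)) (b := 0)).symm,
      setLIntegral_congr (Ioo_ae_eq_Ioc (a := (0:ℝ)) (b := 1/2)).symm]
  rw [hsplit]
  have hcancel : ∀ a b c : ENNReal, 2 * a = c → 2 * b = c → a + b = c := by
    intro a b c ha hb
    have hab : a = b := (ENNReal.mul_right_inj (by simp) (by simp)).1 (ha.trans hb.symm)
    rw [← ha, ← hab, two_mul]
  exact hcancel _ _ _ h2 h1
/-- For `m ≥ 2` and an initial probability density `p₀ ∈ L¹[−2,2]`,
the densities `pₙᵐ` of the pushforward measures `(f_mⁿ)_* μ₀` converge to the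
invariant density `D` in `L¹[−2,2]`. -/
theorem genLogistic_L1_convergence
    (m : ℕ) (hm : 2 ≤ m)
    (p₀ : ℝ → ℝ) (hmeas : Measurable p₀) (hpos : ∀ x, 0 ≤ p₀ x)
    (hsupp : ∀ x, x ∉ Set.Icc (-2 : ℝ) 2 → p₀ x = 0)
    (hint : IntegrableOn p₀ (Set.Icc (-2 : ℝ) 2))
    (hnorm : ∫ x in Set.Icc (-2 : ℝ) 2, p₀ x = 1) :
    Tendsto
      (fun n : ℕ => ∫ x in Set.Icc (-2 : ℝ) 2,
        |((((volume.withDensity (fun y => ENNReal.ofReal (p₀ y))).map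
            ((genLogistic m)^[n])).rnDeriv volume) x).toReal - dosDensity x|)
      atTop (𝓝 0) := by
  set μ₀ : Measure ℝ := volume.withDensity (fun y => ENNReal.ofReal (p₀ y)) with hμ₀
  have hp₀int : Integrable p₀ := by
    rw [← integrableOn_univ]
    exact hint.of_forall_sdiff_eq_zero MeasurableSet.univ (fun x hx => hsupp x hx.2)
  have hp₀one : ∫ x, p₀ x = 1 := by
    rw [← hnorm, setIntegral_eq_integral_of_forall_compl_eq_zero hsupp]
  have hfin : IsFiniteMeasure μ₀ := isFiniteMeasure_withDensity_ofReal hp₀int.2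
  have hDmeas := measurable_dosDensity
  -- the density relative to the invariant measure, lifted to the circle
  set g : ℝ → ℝ := fun x => p₀ x / dosDensity x with hg
  have hgmeas : Measurable g := hmeas.div hDmeas
  have hgpos : ∀ x, 0 ≤ g x := fun x => div_nonneg (hpos x) (dosDensity_nonneg x)
  set q : UnitAddCircle → ℝ := fun t => g (circCos t) with hq
  have hqmeas : Measurable q := hgmeas.comp measurable_circCos
  have hqpos : ∀ t, 0 ≤ q t := fun t => hgpos _
  have hμ₀g : μ₀ = (volume.withDensity (fun x => ENNReal.ofReal (dosDensity x))).withDensity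
      (fun x => ENNReal.ofReal (g x)) := by
    rw [← withDensity_mul _ hDmeas.ennreal_ofReal hgmeas.ennreal_ofReal, hμ₀]
    refine withDensity_congr_ae ?_
    have hne : ∀ a : ℝ, ∀ᵐ x : ℝ, x ≠ a := fun a => by simp [ae_iff]
    filter_upwards [hne 2, hne (-2)] with x h1 h2
    simp only [Pi.mul_apply]
    rw [← ENNReal.ofReal_mul (dosDensity_nonneg x)]
    congr 1
    by_cases hx : x ∈ Set.Ioo (-2 : ℝ) 2
    · rw [hg]
      exact (mul_div_cancel₀ _ (dosDensity_pos hx).ne').symm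
    · rw [hsupp x, hg]
      · simp only
        have : dosDensity x = 0 := by unfold dosDensity; exact if_neg hx
        simp [this]
      · intro h
        exact hx ⟨lt_of_le_of_ne h.1 h2.symm, lt_of_le_of_ne h.2 h1⟩
  have hμ₀map : μ₀ = Measure.map circCos (volume.withDensity (fun t => ENNReal.ofReal (q t))) := by
    refine Measure.ext_of_lintegral _ fun F hF => ?_
    rw [hμ₀g, ← map_circCos, lintegral_map hF measurable_circCos,
      lintegral_withDensity_eq_lintegral_mul _ hgmeas.ennreal_ofReal hF,
      lintegral_withDensity_eq_lintegral_mul _ hqmeas.ennreal_ofReal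
        (show Measurable (fun t => F (circCos t)) from hF.comp measurable_circCos),
      lintegral_map (hgmeas.ennreal_ofReal.mul hF) measurable_circCos]
    rfl
  have hint_eq : ∀ F : ℝ → ℝ, Measurable F →
      ∫ x, F x ∂μ₀ = ∫ t : UnitAddCircle, F (circCos t) * q t := by
    intro F hF
    rw [hμ₀map, integral_map measurable_circCos.aemeasurable hF.aestronglyMeasurable,
      integral_withDensity_eq_integral_toReal_smul hqmeas.ennreal_ofReal (by simp)]
    refine integral_congr_ae (Eventually.of_forall fun t => ?_)
    simp only [smul_eq_mul]
    rw [ENNReal.toReal_ofReal (hqpos t), mul_comm]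
  have hqint : Integrable q := by
    refine ⟨hqmeas.aestronglyMeasurable, ?_⟩
    rw [hasFiniteIntegral_iff_ofReal (Eventually.of_forall hqpos)]
    have h1 : μ₀ Set.univ < ⊤ := measure_lt_top _ _
    rw [hμ₀map, Measure.map_apply measurable_circCos MeasurableSet.univ, Set.preimage_univ,
      withDensity_apply _ MeasurableSet.univ, Measure.restrict_univ] at h1
    exact h1
  have hqone : ∫ t, q t = 1 := by
    have h1 := hint_eq (fun _ => 1) measurable_const
    simp only [one_mul] at h1
    rw [← h1, hμ₀, integral_withDensity_eq_integral_toReal_smul hmeas.ennreal_ofReal (by simp)]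
    refine Eq.trans ?_ hp₀one
    refine integral_congr_ae (Eventually.of_forall fun t => ?_)
    simp [ENNReal.toReal_ofReal (hpos t)]
  have hDint_eq : ∀ F : ℝ → ℝ, Measurable F →
      ∫ x, dosDensity x * F x = ∫ t : UnitAddCircle, F (circCos t) := by
    intro F hF
    rw [← integral_map measurable_circCos.aemeasurable hF.aestronglyMeasurable, map_circCos,
      integral_withDensity_eq_integral_toReal_smul hDmeas.ennreal_ofReal (by simp)]
    refine integral_congr_ae (Eventually.of_forall fun t => ?_)
    simp [ENNReal.toReal_ofReal (dosDensity_nonneg t)]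
  have hDint : Integrable dosDensity := by
    refine ⟨hDmeas.aestronglyMeasurable, ?_⟩
    rw [hasFiniteIntegral_iff_ofReal (Eventually.of_forall dosDensity_nonneg)]
    have h1 : (Measure.map circCos volume) Set.univ < ⊤ := by
      rw [Measure.map_apply measurable_circCos MeasurableSet.univ]
      simp
    rw [map_circCos, withDensity_apply _ MeasurableSet.univ, Measure.restrict_univ] at h1
    exact h1
  have hac : ∀ n : ℕ, μ₀.map ((genLogistic m)^[n]) ≪ volume := by
    intro n
    have hM : 0 < m ^ n := by positivity
    have hcomp : (genLogistic m)^[n] ∘ circCos = circCos ∘ (fun t => m ^ n • t) := by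
      funext t; exact genLogistic_iter_circCos m n t
    rw [hμ₀map, Measure.map_map (measurable_genLogistic_iter m n) measurable_circCos, hcomp,
      ← Measure.map_map measurable_circCos (measurable_const_smul (m ^ n))]
    have h1 : Measure.map (fun t : UnitAddCircle => m ^ n • t)
        (volume.withDensity (fun t => ENNReal.ofReal (q t))) ≪ volume := by
      have := (withDensity_absolutelyContinuous (volume : Measure UnitAddCircle)
        (fun t => ENNReal.ofReal (q t))).map (measurable_const_smul (m ^ n))
      rwa [(mp_nsmul (m ^ n) hM).map_eq] at this
    have h2 := h1.map measurable_circCos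
    rw [map_circCos] at h2
    exact h2.trans (withDensity_absolutelyContinuous _ _)
  rw [Metric.tendsto_atTop]
  intro ε hε
  obtain ⟨N, hN⟩ := circle_mixing m hm q hqint (ε / 2) (by positivity)
  refine ⟨N, fun n hn => ?_⟩
  set ν := μ₀.map ((genLogistic m)^[n]) with hν
  set r : ℝ → ℝ := fun x => (ν.rnDeriv volume x).toReal with hr
  have hrint : Integrable r := Measure.integrable_toReal_rnDeriv
  have hrmeas : Measurable r := (Measure.measurable_rnDeriv _ _).ennreal_toReal
  set F : ℝ → ℝ := fun x => if dosDensity x ≤ r x then 1 else -1 with hF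
  have hFmeas : Measurable F :=
    Measurable.ite (measurableSet_le hDmeas hrmeas) measurable_const measurable_const
  have hFb : ∀ x, |F x| ≤ 1 := by
    intro x; simp only [hF]; split_ifs <;> simp
  have hFabs : ∀ x, |r x - dosDensity x| = r x * F x - dosDensity x * F x := by
    intro x
    simp only [hF]
    split_ifs with h
    · rw [abs_of_nonneg (by linarith)]; ring
    · rw [abs_of_neg (by linarith)]; ring
  have hle : ∫ x in Set.Icc (-2 : ℝ) 2, |r x - dosDensity x| ≤ ∫ x, |r x - dosDensity x| :=
    setIntegral_le_integral (hrint.sub hDint).abs (Eventually.of_forall fun x => abs_nonneg _)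
  have hbd : ∀ u : ℝ → ℝ, Integrable u → Integrable (fun x => u x * F x) := fun u hu =>
    hu.mul_bdd (c := 1) hFmeas.aestronglyMeasurable (Eventually.of_forall hFb)
  have hE : ∫ x, |r x - dosDensity x| =
      (∫ t : UnitAddCircle, F (circCos (m ^ n • t)) * q t) -
        (∫ t : UnitAddCircle, q t) * ∫ t : UnitAddCircle, F (circCos t) := by
    simp_rw [hFabs]
    rw [integral_sub (hbd _ hrint) (hbd _ hDint), hDint_eq F hFmeas, hqone, one_mul]
    congr 1
    have h1 := integral_rnDeriv_smul (f := F) (hac n)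
    simp only [smul_eq_mul] at h1
    rw [← hν] at h1
    rw [h1, hν, integral_map (measurable_genLogistic_iter m n).aemeasurable
      hFmeas.aestronglyMeasurable,
      hint_eq (fun x => F ((genLogistic m)^[n] x)) (hFmeas.comp (measurable_genLogistic_iter m n))]
    simp only [genLogistic_iter_circCos]
  have hfinal := hN n hn (fun t => F (circCos t)) (hFmeas.comp measurable_circCos)
    (fun t => hFb _)
  rw [← hE] at hfinal
  have h0 : 0 ≤ ∫ x in Set.Icc (-2 : ℝ) 2, |r x - dosDensity x| :=
    integral_nonneg fun x => abs_nonneg _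
  rw [Real.dist_eq, sub_zero]
  change |(∫ x in Set.Icc (-2 : ℝ) 2, |r x - dosDensity x| )| < ε
  rw [abs_of_nonneg h0]
  have := le_abs_self (∫ x, |r x - dosDensity x|)
  linarith
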